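/- arXiv:2205.01921 — 2 statements merged into one kernel-verified Lean document; each statement's English description precedes it below -/
import Mathlib

section
/- Lemma (generalized Newton descent). Let a ≤ b be integers with ℓ = b − a + 1 ≥ 2, let u_a,…,u_b ∈ [−1,1], let x_j = [1, j − a + 1]ᵀ ∈ ℝ², A = Σ_{j=a}^b x_j x_jᵀ (which is invertible), and β = A^{−1} Σ_{j=a}^b u_j x_j (the least-squares coefficient). Suppose each f_j : ℝ → ℝ (j = a,…,b) is twice continuously differentiable on [−20,20] with |f_j'(z)| ≤ 1 and f_j''(z) ≤ 1 for all z ∈ [−20,20]. Define F(β') = Σ_{j=a}^b f_j(x_jᵀ β') and the Newton-type update α = β − A^{−1} ∇F(β). Then F(α) − F(β) ≤ −(1/2)·∇F(β)ᵀ A^{−1} ∇F(β) = −(1/2)‖∇F(β)‖²_{A^{−1}}. -/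
/-- Covariate `x_j = [1, j - a + 1]ᵀ` for an interval starting at `a`. -/
noncomputable def xv (a j : ℕ) : Fin 2 → ℝ := ![1, (j : ℝ) - (a : ℝ) + 1]

/-!
Put `v = A⁻¹ ∇F(β)`, so that `α = β - v` and `A v = ∑ f_j'(x_jᵀ β) x_j`. Expanding each `f_j` to
second order along the step, the first-order terms add up to `-vᵀ ∇F(β) = -vᵀ A v`, and since
`f_j'' ≤ 1` the second-order ones add up to at most `½ ∑ (x_jᵀ v)² = ½ vᵀ A v`.

The expansion is legitimate if the predictions of `β` and `α` stay in `[-20, 20]`. Both `β` and `v`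
are least-squares coefficients, of the responses `u_j` and `f_j'(x_jᵀ β)`, which lie in `[-1, 1]`.
If `w` are the responses and `y = A⁻¹ x_j`, the prediction at `x_j` is `∑ w_k (yᵀ x_k)`, so by
Cauchy–Schwarz its square is at most `∑ w_k²` times the leverage `yᵀ A y = x_jᵀ A⁻¹ x_j`. On an
interval of length `ℓ` the leverages are at most `4 / ℓ`, so these predictions are at most `2`.
-/

theorem add_mul_sub_le_of_convexOn {S : Set ℝ} {f : ℝ → ℝ} {f' x y : ℝ} (hf : ConvexOn ℝ S f)
    (hx : x ∈ S) (hy : y ∈ S) (hf' : HasDerivWithinAt f f' S x) :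
    f x + f' * (y - x) ≤ f y := by
  rcases lt_trichotomy x y with hxy | rfl | hyx
  · have hslope := hf.le_slope_of_hasDerivWithinAt hx hy hxy hf'
    rw [slope_def_field, le_div_iff₀ (sub_pos.2 hxy)] at hslope
    linarith
  · simp
  · have hslope := hf.slope_le_of_hasDerivWithinAt hy hx hyx hf'
    rw [slope_def_field, div_le_iff₀ (sub_pos.2 hyx)] at hslope
    linarith

theorem le_add_mul_sub_add_sq_of_hasDerivWithinAt2_le {S : Set ℝ} (hS : Convex ℝ S)
    {f f' f'' : ℝ → ℝ} {L : ℝ} (hf : ∀ z ∈ S, HasDerivWithinAt f (f' z) S z)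
    (hf' : ∀ z ∈ interior S, HasDerivWithinAt f' (f'' z) (interior S) z)
    (hf'' : ∀ z ∈ interior S, f'' z ≤ L) {x y : ℝ} (hx : x ∈ S) (hy : y ∈ S) :
    f y ≤ f x + f' x * (y - x) + L / 2 * (y - x) ^ 2 := by
  have hderiv (z : ℝ) (hz : z ∈ S) :
      HasDerivWithinAt (fun z ↦ L / 2 * z ^ 2 - f z) (L * z - f' z) S z := by
    refine (((hasDerivWithinAt_id z S).pow 2).const_mul (L / 2) |>.sub (hf z hz)).congr_deriv ?_
    simp only [id_eq]
    ring
  have hconvex : ConvexOn ℝ S (fun z ↦ L / 2 * z ^ 2 - f z) := by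
    refine convexOn_of_hasDerivWithinAt2_nonneg hS (f'' := fun z ↦ L * 1 - f'' z)
      (fun z hz ↦ (hderiv z hz).continuousWithinAt)
      (fun z hz ↦ (hderiv z (interior_subset hz)).mono interior_subset)
      (fun z hz ↦ ((hasDerivWithinAt_id z _).const_mul L).sub (hf' z hz)) fun z hz ↦ ?_
    linarith [hf'' z hz]
  have htangent := add_mul_sub_le_of_convexOn hconvex hx hy (hderiv x hx)
  linarith

section LeastSquares

open Finset Matrix

variable {ι n : Type*} [Fintype n] (s : Finset ι) (x : ι → n → ℝ)

/-- The matrix `∑ x_j x_jᵀ` of the normal equations for the covariates `x_j`, `j ∈ s`. -/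
def momentMatrix : Matrix n n ℝ :=
  ∑ j ∈ s, vecMulVec (x j) (x j)

/-- The leverage `x_jᵀ A⁻¹ x_j` of the `j`-th covariate, where `A` is the moment matrix over `s`;
a junk value if `A` is singular. -/
noncomputable def leverage [DecidableEq n] (j : ι) : ℝ :=
  x j ⬝ᵥ (momentMatrix s x)⁻¹ *ᵥ x j

theorem dotProduct_momentMatrix_mulVec (y z : n → ℝ) :
    y ⬝ᵥ momentMatrix s x *ᵥ z = ∑ j ∈ s, (y ⬝ᵥ x j) * (z ⬝ᵥ x j) := by
  simp only [momentMatrix, sum_mulVec, dotProduct_sum, vecMulVec_mulVec, dotProduct_smul,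
    MulOpposite.smul_eq_mul_unop, MulOpposite.unop_op, dotProduct_comm z]

variable {s x}

theorem sq_dotProduct_le_of_momentMatrix_mulVec_eq {v y z : n → ℝ} {w : ι → ℝ}
    (hv : momentMatrix s x *ᵥ v = ∑ j ∈ s, w j • x j) (hy : momentMatrix s x *ᵥ y = z) :
    (v ⬝ᵥ z) ^ 2 ≤ (∑ j ∈ s, w j ^ 2) * (y ⬝ᵥ z) := by
  have hvz : v ⬝ᵥ z = ∑ j ∈ s, w j * (y ⬝ᵥ x j) :=
    calc v ⬝ᵥ z = y ⬝ᵥ momentMatrix s x *ᵥ v := by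
          simp only [← hy, dotProduct_momentMatrix_mulVec, mul_comm]
      _ = ∑ j ∈ s, w j * (y ⬝ᵥ x j) := by
          simp only [hv, dotProduct_sum, dotProduct_smul, smul_eq_mul]
  have hyz : y ⬝ᵥ z = ∑ j ∈ s, (y ⬝ᵥ x j) ^ 2 := by
    simp only [← hy, dotProduct_momentMatrix_mulVec, sq]
  rw [hvz, hyz]
  exact sum_mul_sq_le_sq_mul_sq s w _

theorem sum_comp_dotProduct_sub_sub_le {S : Set ℝ} (hS : Convex ℝ S) {f f' f'' : ι → ℝ → ℝ} {L : ℝ}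
    (hf : ∀ j ∈ s, ∀ z ∈ S, HasDerivWithinAt (f j) (f' j z) S z)
    (hf' : ∀ j ∈ s, ∀ z ∈ interior S, HasDerivWithinAt (f' j) (f'' j z) (interior S) z)
    (hf'' : ∀ j ∈ s, ∀ z ∈ interior S, f'' j z ≤ L) {β v : n → ℝ}
    (hβ : ∀ j ∈ s, β ⬝ᵥ x j ∈ S) (hβv : ∀ j ∈ s, (β - v) ⬝ᵥ x j ∈ S)
    (hv : momentMatrix s x *ᵥ v = ∑ j ∈ s, f' j (β ⬝ᵥ x j) • x j) :
    ∑ j ∈ s, f j ((β - v) ⬝ᵥ x j) - ∑ j ∈ s, f j (β ⬝ᵥ x j) ≤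
      (L / 2 - 1) * (v ⬝ᵥ momentMatrix s x *ᵥ v) := by
  have hlin : ∑ j ∈ s, f' j (β ⬝ᵥ x j) * (v ⬝ᵥ x j) = v ⬝ᵥ momentMatrix s x *ᵥ v := by
    simp only [hv, dotProduct_sum, dotProduct_smul, smul_eq_mul]
  have hquad : ∑ j ∈ s, (v ⬝ᵥ x j) ^ 2 = v ⬝ᵥ momentMatrix s x *ᵥ v := by
    simp only [dotProduct_momentMatrix_mulVec, sq]
  calc ∑ j ∈ s, f j ((β - v) ⬝ᵥ x j) - ∑ j ∈ s, f j (β ⬝ᵥ x j)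
      = ∑ j ∈ s, (f j ((β - v) ⬝ᵥ x j) - f j (β ⬝ᵥ x j)) := (sum_sub_distrib _ _).symm
    _ ≤ ∑ j ∈ s, (L / 2 * (v ⬝ᵥ x j) ^ 2 - f' j (β ⬝ᵥ x j) * (v ⬝ᵥ x j)) := by
      refine sum_le_sum fun j hj ↦ ?_
      have hstep : (β - v) ⬝ᵥ x j - β ⬝ᵥ x j = -(v ⬝ᵥ x j) := by
        rw [sub_dotProduct]
        ring
      have htaylor := le_add_mul_sub_add_sq_of_hasDerivWithinAt2_le hS (hf j hj) (hf' j hj)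
        (hf'' j hj) (hβ j hj) (hβv j hj)
      rw [hstep] at htaylor
      linarith
    _ = (L / 2 - 1) * (v ⬝ᵥ momentMatrix s x *ᵥ v) := by
      rw [sum_sub_distrib, ← mul_sum, hlin, hquad]
      ring

variable [DecidableEq n]

theorem mulVec_nonsing_inv_mulVec {R : Type*} [CommRing R] {A : Matrix n n R}
    (hA : IsUnit A.det) (y : n → R) : A *ᵥ A⁻¹ *ᵥ y = y := by
  rw [mulVec_mulVec, mul_nonsing_inv _ hA, one_mulVec]

variable (s x) in
theorem leverage_nonneg (j : ι) : 0 ≤ leverage s x j := by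
  have hpsd : (momentMatrix s x).PosSemidef :=
    posSemidef_sum s fun k _ ↦ posSemidef_vecMulVec_self_star (x k)
  exact hpsd.inv.dotProduct_mulVec_nonneg (x j)

theorem abs_dotProduct_le_of_card_mul_leverage_le (hdet : IsUnit (momentMatrix s x).det)
    {κ c : ℝ} (hκ : 0 ≤ κ) {v : n → ℝ} {w : ι → ℝ} (hw : ∀ j ∈ s, |w j| ≤ c)
    (hv : momentMatrix s x *ᵥ v = ∑ j ∈ s, w j • x j) {j : ι} (hj : j ∈ s)
    (hlev : #s * leverage s x j ≤ κ ^ 2) : |v ⬝ᵥ x j| ≤ κ * c := by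
  have hc : 0 ≤ c := (abs_nonneg _).trans (hw j hj)
  have hlev_nonneg : 0 ≤ leverage s x j := leverage_nonneg s x j
  have hsum : ∑ k ∈ s, w k ^ 2 ≤ #s * c ^ 2 := by
    rw [← nsmul_eq_mul]
    exact sum_le_card_nsmul s _ _ fun k hk ↦ sq_le_sq.2 ((hw k hk).trans (le_abs_self c))
  refine abs_le_of_sq_le_sq ?_ (mul_nonneg hκ hc)
  calc (v ⬝ᵥ x j) ^ 2 ≤ (∑ k ∈ s, w k ^ 2) * leverage s x j := by
        rw [leverage, dotProduct_comm (x j)]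
        exact sq_dotProduct_le_of_momentMatrix_mulVec_eq hv (mulVec_nonsing_inv_mulVec hdet _)
    _ ≤ #s * c ^ 2 * leverage s x j := by gcongr
    _ = #s * leverage s x j * c ^ 2 := by ring
    _ ≤ κ ^ 2 * c ^ 2 := by gcongr
    _ = (κ * c) ^ 2 := (mul_pow κ c 2).symm

theorem generalized_newton_descent_general (hdet : IsUnit (momentMatrix s x).det)
    {κ : ℝ} (hκ : 0 ≤ κ) (hlev : ∀ j ∈ s, #s * leverage s x j ≤ κ ^ 2)
    {c d : ℝ} (hd : 0 ≤ d) {S : Set ℝ} (hS : Convex ℝ S)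
    (hcd : Set.Icc (-(κ * (c + d))) (κ * (c + d)) ⊆ S) {u : ι → ℝ} (hu : ∀ j ∈ s, |u j| ≤ c)
    {f f' f'' : ι → ℝ → ℝ} {L : ℝ} (hf : ∀ j ∈ s, ∀ z ∈ S, HasDerivWithinAt (f j) (f' j z) S z)
    (hf' : ∀ j ∈ s, ∀ z ∈ interior S, HasDerivWithinAt (f' j) (f'' j z) (interior S) z)
    (hf1 : ∀ j ∈ s, ∀ z ∈ S, |f' j z| ≤ d) (hf2 : ∀ j ∈ s, ∀ z ∈ interior S, f'' j z ≤ L)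
    {β g α : n → ℝ} (hβ : β = (momentMatrix s x)⁻¹ *ᵥ ∑ j ∈ s, u j • x j)
    (hg : g = ∑ j ∈ s, f' j (β ⬝ᵥ x j) • x j) (hα : α = β - (momentMatrix s x)⁻¹ *ᵥ g) :
    ∑ j ∈ s, f j (α ⬝ᵥ x j) - ∑ j ∈ s, f j (β ⬝ᵥ x j) ≤
      (L / 2 - 1) * (g ⬝ᵥ (momentMatrix s x)⁻¹ *ᵥ g) := by
  set v := (momentMatrix s x)⁻¹ *ᵥ g
  have hv : momentMatrix s x *ᵥ v = g := mulVec_nonsing_inv_mulVec hdet g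
  have hβ_abs (j) (hj : j ∈ s) : |β ⬝ᵥ x j| ≤ κ * c :=
    abs_dotProduct_le_of_card_mul_leverage_le hdet hκ hu
      (hβ ▸ mulVec_nonsing_inv_mulVec hdet _) hj (hlev j hj)
  have hβ_mem (j) (hj : j ∈ s) : β ⬝ᵥ x j ∈ S :=
    hcd (abs_le.1 ((hβ_abs j hj).trans (by gcongr; linarith)))
  have hv_abs (j) (hj : j ∈ s) : |v ⬝ᵥ x j| ≤ κ * d :=
    abs_dotProduct_le_of_card_mul_leverage_le hdet hκ (fun k hk ↦ hf1 k hk _ (hβ_mem k hk))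
      (hv.trans hg) hj (hlev j hj)
  have hα_mem (j) (hj : j ∈ s) : (β - v) ⬝ᵥ x j ∈ S := by
    refine hcd (abs_le.1 ?_)
    rw [sub_dotProduct, mul_add]
    exact (abs_sub _ _).trans (add_le_add (hβ_abs j hj) (hv_abs j hj))
  rw [hα, dotProduct_comm g, ← hv]
  exact sum_comp_dotProduct_sub_sub_le hS hf hf' hf2 hβ_mem hα_mem (hv.trans hg)

end LeastSquares

section Interval

open Finset Matrix

variable {a b : ℕ}

theorem sum_Icc_sub_add_one (hab : a ≤ b) :
    ∑ j ∈ Icc a b, ((j : ℝ) - a + 1) = (b - a + 1) * (b - a + 2) / 2 := by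
  induction b, hab using Nat.le_induction with
  | base => simp
  | succ b hab ih =>
    rw [sum_Icc_succ_top (by lia), ih]
    push_cast
    ring

theorem sum_Icc_sub_add_one_sq (hab : a ≤ b) :
    ∑ j ∈ Icc a b, ((j : ℝ) - a + 1) ^ 2 =
      ((b : ℝ) - a + 1) * (b - a + 2) * (2 * (b - a) + 3) / 6 := by
  induction b, hab using Nat.le_induction with
  | base => norm_num
  | succ b hab ih =>
    rw [sum_Icc_succ_top (by lia), ih]
    push_cast
    ring

theorem cast_card_Icc_eq_sub_add_one (hab : a ≤ b) : (#(Icc a b) : ℝ) = b - a + 1 := by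
  rw [Nat.card_Icc, Nat.cast_sub (by lia)]
  push_cast
  ring

theorem momentMatrix_xv (hab : a ≤ b) :
    momentMatrix (Icc a b) (xv a) =
      !![(b - a + 1 : ℝ), (b - a + 1) * (b - a + 2) / 2;
        (b - a + 1) * (b - a + 2) / 2, (b - a + 1) * (b - a + 2) * (2 * (b - a) + 3) / 6] := by
  ext i k
  rw [momentMatrix, Matrix.sum_apply]
  fin_cases i <;> fin_cases k <;>
    simp [vecMulVec_apply, xv, ← sq, sum_Icc_sub_add_one hab, sum_Icc_sub_add_one_sq hab,
      ← cast_card_Icc_eq_sub_add_one hab, -Nat.card_Icc]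

theorem det_momentMatrix_xv (hab : a ≤ b) :
    (momentMatrix (Icc a b) (xv a)).det = (b - a + 1) ^ 2 * ((b - a) * (b - a + 2)) / 12 := by
  rw [momentMatrix_xv hab, det_fin_two_of]
  ring

theorem isUnit_det_momentMatrix_xv (hab : a < b) :
    IsUnit (momentMatrix (Icc a b) (xv a)).det := by
  have hpos : (0 : ℝ) < b - a := sub_pos.2 (Nat.cast_lt.2 hab)
  rw [det_momentMatrix_xv hab.le, isUnit_iff_ne_zero]
  positivity

theorem card_mul_leverage_xv (hab : a < b) (j : ℕ) :
    #(Icc a b) * leverage (Icc a b) (xv a) j =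
      1 + 3 * (2 * j - a - b) ^ 2 / ((b - a) * (b - a + 2)) := by
  have hpos : (0 : ℝ) < b - a := sub_pos.2 (Nat.cast_lt.2 hab)
  rw [leverage, Matrix.inv_def, det_momentMatrix_xv hab.le, momentMatrix_xv hab.le,
    adjugate_fin_two_of, Ring.inverse_eq_inv', cast_card_Icc_eq_sub_add_one hab.le]
  simp only [xv, smul_mulVec, dotProduct_smul, smul_eq_mul, mulVec, vec2_dotProduct, of_apply,
    cons_val_zero, cons_val_one]
  field_simp
  ring

theorem card_mul_leverage_xv_le {j : ℕ} (hab : a < b) (hj : j ∈ Icc a b) :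
    #(Icc a b) * leverage (Icc a b) (xv a) j ≤ 2 ^ 2 := by
  have hpos : (0 : ℝ) < b - a := sub_pos.2 (Nat.cast_lt.2 hab)
  obtain ⟨haj, hjb⟩ := mem_Icc.1 hj
  have haj' : (a : ℝ) ≤ j := Nat.cast_le.2 haj
  have hjb' : (j : ℝ) ≤ b := Nat.cast_le.2 hjb
  have hdist : (2 * j - a - b : ℝ) ^ 2 ≤ (b - a) ^ 2 := sq_le_sq' (by linarith) (by linarith)
  have hfrac : 3 * (2 * j - a - b : ℝ) ^ 2 / ((b - a) * (b - a + 2)) ≤ 3 := by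
    rw [div_le_iff₀ (by positivity)]
    nlinarith
  rw [card_mul_leverage_xv hab]
  linarith

end Interval

/-!
Lemma (generalized Newton descent).  With `ℓ = b - a + 1 ≥ 2`, `u_j ∈ [-1,1]`,
`A = Σ_j x_j x_jᵀ`, `β = A⁻¹ Σ_j u_j x_j` the least-squares coefficient, `f_j` twice
continuously differentiable on `[-20, 20]` with `|f_j'| ≤ 1` and `f_j'' ≤ 1` there,
`F(β') = Σ_j f_j(x_jᵀ β')`, and the Newton-type update `α = β - A⁻¹ ∇F(β)`, we have
`F(α) - F(β) ≤ -(1/2) ∇F(β)ᵀ A⁻¹ ∇F(β)`.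
-/
theorem generalized_newton_descent (a b : ℕ) (hab : a ≤ b) (hlen : 2 ≤ b - a + 1)
    (u : ℕ → ℝ) (hu : ∀ j ∈ Finset.Icc a b, u j ∈ Set.Icc (-1 : ℝ) 1)
    (f : ℕ → ℝ → ℝ)
    (hf : ∀ j ∈ Finset.Icc a b, ContDiffOn ℝ 2 (f j) (Set.Icc (-20 : ℝ) 20))
    (hf1 : ∀ j ∈ Finset.Icc a b, ∀ z ∈ Set.Icc (-20 : ℝ) 20,
      |derivWithin (f j) (Set.Icc (-20 : ℝ) 20) z| ≤ 1)
    (hf2 : ∀ j ∈ Finset.Icc a b, ∀ z ∈ Set.Icc (-20 : ℝ) 20,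
      derivWithin (derivWithin (f j) (Set.Icc (-20 : ℝ) 20)) (Set.Icc (-20 : ℝ) 20) z ≤ 1)
    (A : Matrix (Fin 2) (Fin 2) ℝ)
    (hA : A = ∑ j ∈ Finset.Icc a b, Matrix.vecMulVec (xv a j) (xv a j))
    (β g α : Fin 2 → ℝ)
    (hβ : β = A⁻¹.mulVec (∑ j ∈ Finset.Icc a b, u j • xv a j))
    (hg : g = ∑ j ∈ Finset.Icc a b,
      derivWithin (f j) (Set.Icc (-20 : ℝ) 20) (∑ i, β i * xv a j i) • xv a j)
    (hα : α = β - A⁻¹.mulVec g) :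
    (∑ j ∈ Finset.Icc a b, f j (∑ i, α i * xv a j i)) -
        (∑ j ∈ Finset.Icc a b, f j (∑ i, β i * xv a j i)) ≤
      -(1 / 2) * ∑ i, g i * A⁻¹.mulVec g i := by
  have hab' : a < b := by lia
  have hI : UniqueDiffOn ℝ (Set.Icc (-20 : ℝ) 20) := uniqueDiffOn_Icc (by norm_num)
  have hdf (j) (hj : j ∈ Finset.Icc a b) : DifferentiableOn ℝ (f j) (Set.Icc (-20) 20) :=
    (hf j hj).differentiableOn two_ne_zero
  have hddf (j) (hj : j ∈ Finset.Icc a b) :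
      DifferentiableOn ℝ (derivWithin (f j) (Set.Icc (-20) 20)) (Set.Icc (-20) 20) :=
    ((hf j hj).derivWithin (m := 1) hI (by norm_num)).differentiableOn one_ne_zero
  subst hA
  rw [show (-(1 / 2) : ℝ) = 1 / 2 - 1 by norm_num]
  exact generalized_newton_descent_general (isUnit_det_momentMatrix_xv hab') zero_le_two
    (fun j hj ↦ card_mul_leverage_xv_le hab' hj) zero_le_one (convex_Icc (-20 : ℝ) 20)
    (Set.Icc_subset_Icc (by norm_num) (by norm_num)) (fun j hj ↦ abs_le.2 (hu j hj))
    (fun j hj z hz ↦ (hdf j hj z hz).hasDerivWithinAt)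
    (fun j hj z hz ↦ (hddf j hj z (interior_subset hz)).hasDerivWithinAt.mono interior_subset)
    hf1 (fun j hj z hz ↦ hf2 j hj z (interior_subset hz)) hβ hg hα
end

section
/- Lemma (boundedness of least-squares and Newton-updated linear predictors). Let a ≤ b be integers with ℓ = b − a + 1 ≥ 2, let u_a,…,u_b ∈ [−1,1], let x_j = [1, j − a + 1]ᵀ ∈ ℝ², A = Σ_{j=a}^b x_j x_jᵀ, and β = A^{−1} Σ_{j=a}^b u_j x_j. Suppose each f_j : ℝ → ℝ is differentiable with |f_j'(z)| ≤ 1 for all z ∈ [−20,20], and define α = β − A^{−1} Σ_{j=a}^b f_j'(x_jᵀβ) x_j. Then: (i) |x_jᵀ β| ≤ 10 for all j ∈ [a,b] and ‖β‖₂ ≤ 8; (ii) |x_jᵀ α| ≤ 20 for all j ∈ [a,b] and ‖α‖₂ ≤ 16. -/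
/-!
For covariates `x_j` with normal matrix `A = ∑ x_j x_jᵀ`, put `c = A⁻¹ v`. The Cauchy-Schwarz
inequality in `v ⬝ A⁻¹ ∑ w_j x_j = ∑ w_j (c ⬝ x_j)` bounds its square by `(v ⬝ A⁻¹ v) ∑ w_j ^ 2`.
For the covariates `(1, 1), …, (1, ℓ)` with `ℓ ≥ 2`, the leverages `x_j ⬝ A⁻¹ x_j` are at most
`4 / ℓ` and the trace of `A⁻¹` is at most `14 / ℓ`, whereas data bounded by `C` have energy at most
`ℓ C ^ 2`. So the predictions are at most `2 C` and the coefficients have norm at most `4 C`. By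
linearity the Newton update is itself the least-squares fit to the data `u_j - f_j'(x_j ⬝ β)`,
bounded by `2`.
-/

open Matrix Finset

section LeastSquares

variable {ι n R : Type*} [CommRing R] (s : Finset ι) (x : ι → n → R)

/-- The matrix `∑ x_j x_jᵀ` of the normal equations of a linear regression on the covariates
`x_j`. -/
def normalMatrix : Matrix n n R := ∑ j ∈ s, vecMulVec (x j) (x j)

lemma isSymm_normalMatrix : (normalMatrix s x).IsSymm := by
  simp only [IsSymm, normalMatrix, transpose_sum, transpose_vecMulVec]

variable [Fintype n]

lemma dotProduct_normalMatrix_mulVec_self (c : n → R) :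
    c ⬝ᵥ normalMatrix s x *ᵥ c = ∑ j ∈ s, (c ⬝ᵥ x j) ^ 2 := by
  simp only [normalMatrix, sum_mulVec, vecMulVec_mulVec, op_smul_eq_smul, dotProduct_sum,
    dotProduct_smul, smul_eq_mul, dotProduct_comm _ c, sq]

lemma sq_dotProduct_sum_smul_le [LinearOrder R] [IsStrictOrderedRing R] (w : ι → R) (c : n → R) :
    (c ⬝ᵥ ∑ j ∈ s, w j • x j) ^ 2 ≤ (c ⬝ᵥ normalMatrix s x *ᵥ c) * ∑ j ∈ s, w j ^ 2 := by
  rw [dotProduct_normalMatrix_mulVec_self, mul_comm]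
  simpa only [dotProduct_sum, dotProduct_smul, smul_eq_mul] using
    sum_mul_sq_le_sq_mul_sq s w fun j => c ⬝ᵥ x j

variable [DecidableEq n]

/-- The coefficients of the linear least-squares fit to the data `w_j` at the covariates `x_j`,
given by the solution formula of the normal equations. The inverse is `0`, and so is the fit, when
the normal matrix is not invertible. -/
noncomputable def leastSquares (w : ι → R) : n → R :=
  (normalMatrix s x)⁻¹ *ᵥ ∑ j ∈ s, w j • x j

lemma leastSquares_sub (w z : ι → R) :
    leastSquares s x (w - z) = leastSquares s x w - leastSquares s x z := by
  simp only [leastSquares, Pi.sub_apply, sub_smul, sum_sub_distrib, mulVec_sub]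

variable [LinearOrder R] [IsStrictOrderedRing R] {s x}

lemma sum_sq_le_card_mul_sq {w : ι → R} {C : R} (hw : ∀ j ∈ s, |w j| ≤ C) :
    ∑ j ∈ s, w j ^ 2 ≤ #s * C ^ 2 := by
  rw [← nsmul_eq_mul]
  exact sum_le_card_nsmul _ _ _ fun j hj => sq_le_sq' (abs_le.1 (hw j hj)).1 (abs_le.1 (hw j hj)).2

lemma sq_dotProduct_leastSquares_le (hx : IsUnit (normalMatrix s x).det) (w : ι → R) (v : n → R) :
    (v ⬝ᵥ leastSquares s x w) ^ 2 ≤ (v ⬝ᵥ (normalMatrix s x)⁻¹ *ᵥ v) * ∑ j ∈ s, w j ^ 2 := by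
  have moved (y : n → R) : v ⬝ᵥ (normalMatrix s x)⁻¹ *ᵥ y = (normalMatrix s x)⁻¹ *ᵥ v ⬝ᵥ y := by
    rw [dotProduct_mulVec, ← mulVec_transpose, transpose_nonsing_inv, isSymm_normalMatrix]
  have solved : normalMatrix s x *ᵥ (normalMatrix s x)⁻¹ *ᵥ v = v := by
    rw [mulVec_mulVec, mul_nonsing_inv _ hx, one_mulVec]
  have := sq_dotProduct_sum_smul_le s x w ((normalMatrix s x)⁻¹ *ᵥ v)
  rwa [solved, ← moved, ← moved] at this

lemma leastSquares_dotProduct_self_le (hx : IsUnit (normalMatrix s x).det) (w : ι → R) :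
    leastSquares s x w ⬝ᵥ leastSquares s x w ≤
      (normalMatrix s x)⁻¹.trace * ∑ j ∈ s, w j ^ 2 := by
  rw [trace, dotProduct, sum_mul]
  refine sum_le_sum fun i _ => ?_
  simpa [← sq] using sq_dotProduct_leastSquares_le hx w (Pi.single i 1)

end LeastSquares

section Interval

variable (a : ℕ) {n : ℕ}

lemma vecMulVec_xv (k : ℕ) :
    vecMulVec (xv a (a + k)) (xv a (a + k)) = !![1, (k + 1 : ℝ); (k + 1 : ℝ), (k + 1 : ℝ) ^ 2] := by
  ext i k
  fin_cases i <;> fin_cases k <;> simp [xv, vecMulVec_apply, sq]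

lemma normalMatrix_xv (n : ℕ) :
    normalMatrix (Icc a (a + n)) (xv a) =
      !![(n + 1 : ℝ), (n + 1) * (n + 2) / 2;
        (n + 1) * (n + 2) / 2, (n + 1) * (n + 2) * (2 * n + 3) / 6] := by
  unfold normalMatrix
  induction n with
  | zero =>
    rw [add_zero, Icc_self, sum_singleton]
    exact (vecMulVec_xv a 0).trans (by norm_num)
  | succ n ih =>
    rw [← add_assoc, sum_Icc_succ_top (by omega), ih, add_assoc, vecMulVec_xv]
    simp only [of_add_of, add_cons, head_cons, tail_cons, empty_add_empty, Nat.cast_succ,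
      EmbeddingLike.apply_eq_iff_eq, vecCons_inj, true_and, and_true]
    refine ⟨?_, ?_, ?_⟩ <;> ring

lemma isUnit_det_normalMatrix_xv (hn : 0 < n) :
    IsUnit (normalMatrix (Icc a (a + n)) (xv a)).det := by
  have det_eq : (normalMatrix (Icc a (a + n)) (xv a)).det =
      (n : ℝ) * (n + 1) ^ 2 * (n + 2) / 12 := by
    rw [normalMatrix_xv, det_fin_two_of]
    ring
  rw [det_eq, isUnit_iff_ne_zero]
  positivity

lemma inv_normalMatrix_xv (hn : 0 < n) :
    (normalMatrix (Icc a (a + n)) (xv a))⁻¹ =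
      (2 / (n * (n + 1)) : ℝ) • !![(2 * n + 3 : ℝ), -3; -3, 6 / (n + 2)] := by
  have : (n : ℝ) ≠ 0 := by positivity
  refine inv_eq_right_inv ?_
  rw [normalMatrix_xv, Matrix.mul_smul, mul_fin_two, one_fin_two]
  simp only [smul_of, smul_cons, smul_eq_mul, Matrix.smul_empty,
    EmbeddingLike.apply_eq_iff_eq, vecCons_inj, and_true]
  refine ⟨⟨?_, ?_⟩, ?_, ?_⟩ <;> field_simp <;> ring

lemma leverage_xv_le (hn : 0 < n) {j : ℕ} (hj : j ∈ Icc a (a + n)) :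
    xv a j ⬝ᵥ (normalMatrix (Icc a (a + n)) (xv a))⁻¹ *ᵥ xv a j ≤ 4 / (n + 1) := by
  obtain ⟨k, rfl⟩ := Nat.exists_eq_add_of_le (mem_Icc.1 hj).1
  have hk : 0 ≤ (n : ℝ) - k :=
    sub_nonneg.2 (by exact_mod_cast Nat.le_of_add_le_add_left (mem_Icc.1 hj).2)
  have leverage_eq : xv a (a + k) ⬝ᵥ (normalMatrix (Icc a (a + n)) (xv a))⁻¹ *ᵥ xv a (a + k) =
      4 / (n + 1) - (6 * n + 12 * k * (n - k)) / (n * (n + 1) * (n + 2)) := by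
    rw [inv_normalMatrix_xv a hn]
    simp only [xv, Nat.cast_add, add_sub_cancel_left, dotProduct, mulVec, Matrix.smul_apply,
      smul_eq_mul, Fin.sum_univ_two, of_apply, cons_val', cons_val_fin_one, cons_val_zero,
      cons_val_one]
    field_simp
    ring
  rw [leverage_eq]
  exact sub_le_self _ (by positivity)

lemma trace_inv_normalMatrix_xv_le (hn : 0 < n) :
    (normalMatrix (Icc a (a + n)) (xv a))⁻¹.trace ≤ 14 / (n + 1) := by
  have hn' : (1 : ℝ) ≤ n := by exact_mod_cast hn
  rw [inv_normalMatrix_xv a hn, trace_smul, trace_fin_two_of, smul_eq_mul, div_mul_eq_mul_div,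
    div_le_div_iff₀ (by positivity) (by positivity)]
  have : 6 / ((n : ℝ) + 2) ≤ 2 := (div_le_iff₀ (by positivity)).2 (by linarith)
  nlinarith

variable {a} {w : ℕ → ℝ} {C : ℝ}

lemma abs_leastSquares_dotProduct_xv_le (hn : 0 < n) (hw : ∀ j ∈ Icc a (a + n), |w j| ≤ C)
    {j : ℕ} (hj : j ∈ Icc a (a + n)) :
    |leastSquares (Icc a (a + n)) (xv a) w ⬝ᵥ xv a j| ≤ 2 * C := by
  have hC : 0 ≤ C := (abs_nonneg _).trans (hw j hj)
  refine abs_le_of_sq_le_sq ?_ (by positivity)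
  calc (leastSquares (Icc a (a + n)) (xv a) w ⬝ᵥ xv a j) ^ 2
      ≤ (xv a j ⬝ᵥ (normalMatrix (Icc a (a + n)) (xv a))⁻¹ *ᵥ xv a j) *
          ∑ j ∈ Icc a (a + n), w j ^ 2 := by
        rw [dotProduct_comm]
        exact sq_dotProduct_leastSquares_le (isUnit_det_normalMatrix_xv a hn) w _
    _ ≤ 4 / (n + 1) * ((n + 1) * C ^ 2) := by
        gcongr
        exacts [leverage_xv_le a hn hj, by simpa [add_assoc] using sum_sq_le_card_mul_sq hw]
    _ = (2 * C) ^ 2 := by field_simp; ring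

lemma sqrt_sq_add_sq_leastSquares_xv_le (hn : 0 < n) (hw : ∀ j ∈ Icc a (a + n), |w j| ≤ C) :
    √(leastSquares (Icc a (a + n)) (xv a) w 0 ^ 2 +
      leastSquares (Icc a (a + n)) (xv a) w 1 ^ 2) ≤ 4 * C := by
  have hC : 0 ≤ C := (abs_nonneg _).trans (hw a (by simp))
  rw [Real.sqrt_le_left (by positivity)]
  calc leastSquares (Icc a (a + n)) (xv a) w 0 ^ 2 + leastSquares (Icc a (a + n)) (xv a) w 1 ^ 2
      = leastSquares (Icc a (a + n)) (xv a) w ⬝ᵥ leastSquares (Icc a (a + n)) (xv a) w := by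
        simp only [dotProduct, Fin.sum_univ_two, sq]
    _ ≤ (normalMatrix (Icc a (a + n)) (xv a))⁻¹.trace * ∑ j ∈ Icc a (a + n), w j ^ 2 :=
        leastSquares_dotProduct_self_le (isUnit_det_normalMatrix_xv a hn) w
    _ ≤ 14 / (n + 1) * ((n + 1) * C ^ 2) := by
        gcongr
        exacts [trace_inv_normalMatrix_xv_le a hn,
          by simpa [add_assoc] using sum_sq_le_card_mul_sq hw]
    _ = 14 * C ^ 2 := by field_simp
    _ ≤ (4 * C) ^ 2 := by nlinarith [sq_nonneg C]

end Interval

/-- `φ j` plays the role of the derivative `f_j'`; it may for instance be a selection of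
subgradients. -/
theorem newton_predictor_bounded_general {a b : ℕ} (hab : a < b) {C D : ℝ} {u : ℕ → ℝ}
    (hu : ∀ j ∈ Icc a b, |u j| ≤ C) {φ : ℕ → ℝ → ℝ}
    (hφ : ∀ j ∈ Icc a b, ∀ z, |z| ≤ 2 * C → |φ j z| ≤ D) {β α : Fin 2 → ℝ}
    (hβ : β = leastSquares (Icc a b) (xv a) u)
    (hα : α = β - leastSquares (Icc a b) (xv a) fun j => φ j (β ⬝ᵥ xv a j)) :
    (∀ j ∈ Icc a b, |β ⬝ᵥ xv a j| ≤ 2 * C) ∧ √(β 0 ^ 2 + β 1 ^ 2) ≤ 4 * C ∧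
      (∀ j ∈ Icc a b, |α ⬝ᵥ xv a j| ≤ 2 * (C + D)) ∧
      √(α 0 ^ 2 + α 1 ^ 2) ≤ 4 * (C + D) := by
  obtain ⟨n, rfl⟩ := Nat.exists_eq_add_of_le hab.le
  have hn : 0 < n := by omega
  have hβ_pred : ∀ j ∈ Icc a (a + n), |β ⬝ᵥ xv a j| ≤ 2 * C := fun j hj =>
    hβ ▸ abs_leastSquares_dotProduct_xv_le hn hu hj
  have hdata : ∀ j ∈ Icc a (a + n), |(u - fun j => φ j (β ⬝ᵥ xv a j)) j| ≤ C + D := fun j hj =>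
    (abs_sub _ _).trans (add_le_add (hu j hj) (hφ j hj _ (hβ_pred j hj)))
  have hα_fit : α = leastSquares (Icc a (a + n)) (xv a) (u - fun j => φ j (β ⬝ᵥ xv a j)) := by
    rw [leastSquares_sub, ← hβ, hα]
  refine ⟨hβ_pred, hβ ▸ sqrt_sq_add_sq_leastSquares_xv_le hn hu, ?_, ?_⟩
  · exact fun j hj => hα_fit ▸ abs_leastSquares_dotProduct_xv_le hn hdata hj
  · exact hα_fit ▸ sqrt_sq_add_sq_leastSquares_xv_le hn hdata

/-!
Lemma (boundedness of least-squares and Newton-updated linear predictors).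
With `ℓ = b - a + 1 ≥ 2`, `u_j ∈ [-1,1]`, `A = Σ_j x_j x_jᵀ`, `β = A⁻¹ Σ_j u_j x_j`,
each `f_j` differentiable with `|f_j'| ≤ 1` on `[-20, 20]`, and
`α = β - A⁻¹ Σ_j f_j'(x_jᵀ β) x_j`, we have:
(i) `|x_jᵀ β| ≤ 10` for all `j` and `‖β‖₂ ≤ 8`;
(ii) `|x_jᵀ α| ≤ 20` for all `j` and `‖α‖₂ ≤ 16`.
-/
theorem newton_predictor_bounded (a b : ℕ) (hab : a ≤ b) (hlen : 2 ≤ b - a + 1)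
    (u : ℕ → ℝ) (hu : ∀ j ∈ Finset.Icc a b, u j ∈ Set.Icc (-1 : ℝ) 1)
    (f : ℕ → ℝ → ℝ)
    (hfd : ∀ j ∈ Finset.Icc a b, Differentiable ℝ (f j))
    (hf1 : ∀ j ∈ Finset.Icc a b, ∀ z ∈ Set.Icc (-20 : ℝ) 20, |deriv (f j) z| ≤ 1)
    (A : Matrix (Fin 2) (Fin 2) ℝ)
    (hA : A = ∑ j ∈ Finset.Icc a b, Matrix.vecMulVec (xv a j) (xv a j))
    (β α : Fin 2 → ℝ)
    (hβ : β = A⁻¹.mulVec (∑ j ∈ Finset.Icc a b, u j • xv a j))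
    (hα : α = β - A⁻¹.mulVec
        (∑ j ∈ Finset.Icc a b, deriv (f j) (∑ i, β i * xv a j i) • xv a j)) :
    (∀ j ∈ Finset.Icc a b, |∑ i, β i * xv a j i| ≤ 10) ∧
      Real.sqrt (β 0 ^ 2 + β 1 ^ 2) ≤ 8 ∧
      (∀ j ∈ Finset.Icc a b, |∑ i, α i * xv a j i| ≤ 20) ∧
      Real.sqrt (α 0 ^ 2 + α 1 ^ 2) ≤ 16 := by
  subst hA
  obtain ⟨hβ_pred, hβ_norm, hα_pred, hα_norm⟩ := newton_predictor_bounded_general (by omega)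
    (fun j hj => abs_le.2 (hu j hj))
    (fun j hj z hz => hf1 j hj z (abs_le.1 (hz.trans (by norm_num)))) hβ hα
  exact ⟨fun j hj => (hβ_pred j hj).trans (by norm_num), hβ_norm.trans (by norm_num),
    fun j hj => (hα_pred j hj).trans (by norm_num), hα_norm.trans (by norm_num)⟩
end
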